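/- arXiv:2201.10232 — 4 statements merged into one kernel-verified Lean document; each statement's English description precedes it below -/
import Mathlib

section
/- Let M ∈ ℝ^{n×n}, N ∈ ℝ^{n×(S−n)}, let Q : ℝⁿ → ℝ^{S−n} be continuous with Q(0) = 0, and let P₁ ∈ ℝ^{n×n} be symmetric positive definite. Define f(x) := M x + N Q(x), V(x) := xᵀ P₁⁻¹ x, and h(x) := f(x)ᵀ P₁⁻¹ f(x) − xᵀ P₁⁻¹ x, and let 𝒱 := {x : h(x) < 0}. For γ > 0 let ℛ_γ := {x : V(x) ≤ γ}. If ℛ_γ ⊆ 𝒱 ∪ {0}, then ℛ_γ is positively invariant for x⁺ = f(x) (x(0) ∈ ℛ_γ implies x(t) ∈ ℛ_γ for all t ≥ 0), and every solution with x(0) ∈ ℛ_γ satisfies x(t) → 0 as t → ∞. (Proposition 1: data-based estimate of the region of attraction.) -/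
open Matrix Filter Topology

/-!
`V` is a strict Lyapunov function on the compact sublevel set `{V ≤ γ}`. It does not increase there,
so the sublevel set is invariant and `V` is antitone along every orbit starting in it. If `y` is a
cluster point of such an orbit, then so is `f y`, and `V` takes the same value at both because an
antitone sequence has at most one cluster point. Strict decrease away from `0` forces `y = 0`, and
by compactness an orbit whose only cluster point is `0` converges to `0`.
-/

section Lyapunov

variable {X α : Type*} {f : X → X} {V : X → α} {K : Set X}

theorem tendsto_of_antitone_of_mapClusterPt {ι : Type*} [Preorder ι] [LinearOrder α]
    [TopologicalSpace α] [OrderTopology α] {u : ι → α} {a : α} (hu : Antitone u)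
    (ha : MapClusterPt a atTop u) : Tendsto u atTop (𝓝 a) := by
  have le_u : ∀ i, a ≤ u i := by
    intro i
    by_contra! hi
    obtain ⟨j, hj, hij⟩ :=
      ((ha.frequently (lt_mem_nhds hi)).and_eventually (eventually_ge_atTop i)).exists
    exact (hu hij).not_gt hj
  refine tendsto_order.mpr ⟨fun b hb => .of_forall fun i => hb.trans_le (le_u i), fun b hb => ?_⟩
  obtain ⟨i, hi⟩ := (ha.frequently (gt_mem_nhds hb)).exists
  filter_upwards [eventually_ge_atTop i] with j hij
  exact (hu hij).trans_lt hi

theorem eq_iterate_of_succ_eq_apply {x : ℕ → X} (hx : ∀ t, x (t + 1) = f (x t)) :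
    x = fun t => f^[t] (x 0) := by
  funext t
  induction t with
  | zero => rfl
  | succ t ih => rw [hx, ih, Function.iterate_succ_apply']

theorem mapsTo_setOf_le_of_apply_le [Preorder α] {a : α} (hle : ∀ y, V y ≤ a → V (f y) ≤ V y) :
    Set.MapsTo f {y | V y ≤ a} {y | V y ≤ a} :=
  fun y hy => (hle y hy).trans hy

theorem antitone_apply_iterate_of_mapsTo [Preorder α] (hfK : Set.MapsTo f K K)
    (hle : ∀ y ∈ K, V (f y) ≤ V y) {x : X} (hx : x ∈ K) : Antitone fun t => V (f^[t] x) :=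
  antitone_nat_of_succ_le fun t => by
    simpa only [Function.iterate_succ_apply'] using hle _ (hfK.iterate t hx)

variable [TopologicalSpace X] [LinearOrder α] [TopologicalSpace α] [OrderTopology α]

theorem apply_eq_of_mapClusterPt_iterate {x y : X} (hanti : Antitone fun t => V (f^[t] x))
    (hf : ContinuousAt f y) (hVy : ContinuousAt V y) (hVfy : ContinuousAt V (f y))
    (hy : MapClusterPt y atTop fun t => f^[t] x) : V (f y) = V y := by
  have cluster_y : MapClusterPt (V y) atTop fun t => V (f^[t] x) := hy.continuousAt_comp hVy
  have cluster_succ : MapClusterPt (V (f y)) atTop fun t => V (f^[t + 1] x) := by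
    simpa only [Function.iterate_succ_apply'] using!
      (hy.continuousAt_comp hf).continuousAt_comp hVfy
  have cluster_fy : MapClusterPt (V (f y)) atTop fun t => V (f^[t] x) :=
    .of_comp (tendsto_add_atTop_nat 1) cluster_succ
  exact tendsto_nhds_unique (tendsto_of_antitone_of_mapClusterPt hanti cluster_fy)
    (tendsto_of_antitone_of_mapClusterPt hanti cluster_y)

theorem tendsto_iterate_of_isCompact_of_strict_lyapunov (hK : IsCompact K) (hfK : Set.MapsTo f K K)
    (hf : ∀ y ∈ K, ContinuousAt f y) (hV : ∀ y ∈ K, ContinuousAt V y)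
    (hle : ∀ y ∈ K, V (f y) ≤ V y) {z : X} (hz : ∀ y ∈ K, V (f y) = V y → y = z) {x : X}
    (hx : x ∈ K) : Tendsto (fun t => f^[t] x) atTop (𝓝 z) := by
  refine hK.tendsto_nhds_of_unique_mapClusterPt (.of_forall fun t => hfK.iterate t hx)
    fun y hy hcluster => hz y hy ?_
  exact apply_eq_of_mapClusterPt_iterate (antitone_apply_iterate_of_mapsTo hfK hle hx)
    (hf y hy) (hV y hy) (hV _ (hfK hy)) hcluster

end Lyapunov

theorem continuous_quadraticMap_of_finiteDimensional {𝕜 E F : Type*} [NontriviallyNormedField 𝕜]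
    [CompleteSpace 𝕜] [NormedAddCommGroup E] [NormedSpace 𝕜 E] [FiniteDimensional 𝕜 E]
    [NormedAddCommGroup F] [NormedSpace 𝕜 F] (q : QuadraticMap 𝕜 E F) :
    Continuous q := by
  obtain ⟨B, rfl⟩ := LinearMap.BilinMap.toQuadraticMap_surjective q
  exact B.toContinuousBilinearMap.continuous.clm_apply continuous_id

section QuadraticForm

variable {E : Type*} [NormedAddCommGroup E] [NormedSpace ℝ E] [FiniteDimensional ℝ E]
  {q : QuadraticForm ℝ E}

theorem exists_pos_mul_norm_sq_le_quadraticForm_of_posDef (hq : q.PosDef) :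
    ∃ c > 0, ∀ x, c * ‖x‖ ^ 2 ≤ q x := by
  obtain ⟨c, hc, hle⟩ := (isCompact_sphere (0 : E) 1).exists_forall_le'
    (continuous_quadraticMap_of_finiteDimensional q).continuousOn (a := 0)
    fun x hx => hq x (ne_zero_of_mem_unit_sphere ⟨x, hx⟩)
  refine ⟨c, hc, fun x => ?_⟩
  obtain rfl | hx := eq_or_ne x 0
  · simp
  calc c * ‖x‖ ^ 2 ≤ q (‖x‖⁻¹ • x) * ‖x‖ ^ 2 := by
        gcongr
        exact hle _ (by simp [norm_smul, hx])
    _ = q x := by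
        rw [q.map_smul, smul_eq_mul]
        field_simp

theorem isCompact_setOf_quadraticForm_le_of_posDef (hq : q.PosDef) (γ : ℝ) :
    IsCompact {x | q x ≤ γ} := by
  obtain ⟨c, hc, hle⟩ := exists_pos_mul_norm_sq_le_quadraticForm_of_posDef hq
  refine Metric.isCompact_of_isClosed_isBounded
    (isClosed_le (continuous_quadraticMap_of_finiteDimensional q) continuous_const)
    (isBounded_iff_forall_norm_le.mpr ⟨√(γ / c), fun x hx => Real.le_sqrt_of_sq_le ?_⟩)
  rw [le_div_iff₀' hc]
  exact (hle x).trans hx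

theorem region_of_attraction_estimate_general (hq : q.PosDef) {f : E → E} (hf : Continuous f)
    (hf0 : f 0 = 0) {γ : ℝ} (hdec : ∀ y, q y ≤ γ → q (f y) < q y ∨ y = 0) {x : ℕ → E}
    (hx : ∀ t, x (t + 1) = f (x t)) (hx0 : q (x 0) ≤ γ) :
    (∀ t, q (x t) ≤ γ) ∧ Tendsto x atTop (𝓝 0) := by
  have hle : ∀ y, q y ≤ γ → q (f y) ≤ q y := fun y hy => by
    obtain hlt | rfl := hdec y hy
    exacts [hlt.le, hf0.symm ▸ le_rfl]
  have hmaps := mapsTo_setOf_le_of_apply_le hle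
  have hq_cont := continuous_quadraticMap_of_finiteDimensional q
  have hcompact := isCompact_setOf_quadraticForm_le_of_posDef hq γ
  rw [eq_iterate_of_succ_eq_apply hx]
  exact ⟨fun t => hmaps.iterate t hx0,
    tendsto_iterate_of_isCompact_of_strict_lyapunov hcompact hmaps
      (fun _ _ => hf.continuousAt) (fun _ _ => hq_cont.continuousAt) hle
      (fun y hy heq => (hdec y hy).resolve_left heq.not_lt) hx0⟩

end QuadraticForm

/-- Proposition 1 (data-based estimate of the region of attraction). -/
theorem region_of_attraction_estimate
    {n p : ℕ}
    (M : Matrix (Fin n) (Fin n) ℝ) (N : Matrix (Fin n) (Fin p) ℝ)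
    (Q : (Fin n → ℝ) → Fin p → ℝ) (hQcont : Continuous Q) (hQ0 : Q 0 = 0)
    (P₁ : Matrix (Fin n) (Fin n) ℝ) (hP₁symm : P₁.IsSymm) (hP₁ : P₁.PosDef)
    (f : (Fin n → ℝ) → Fin n → ℝ)
    (hf : ∀ x, f x = M *ᵥ x + N *ᵥ Q x)
    (V : (Fin n → ℝ) → ℝ) (hV : ∀ x, V x = x ⬝ᵥ (P₁⁻¹ *ᵥ x))
    (h : (Fin n → ℝ) → ℝ)
    (hh : ∀ x, h x = f x ⬝ᵥ (P₁⁻¹ *ᵥ f x) - x ⬝ᵥ (P₁⁻¹ *ᵥ x))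
    (γ : ℝ) (hγ : 0 < γ)
    -- ℛ_γ ⊆ 𝒱 ∪ {0}
    (hsub : ∀ x, V x ≤ γ → h x < 0 ∨ x = 0) :
    ∀ x : ℕ → Fin n → ℝ, (∀ t, x (t + 1) = f (x t)) → V (x 0) ≤ γ →
      (∀ t, V (x t) ≤ γ) ∧ Filter.Tendsto x Filter.atTop (nhds 0) := by
  intro x hx hx0
  obtain rfl : V = P₁⁻¹.toQuadraticForm' := funext fun y => by
    simp [hV, toQuadraticForm', toLinearMap₂'_apply']
  have f_continuous : Continuous f := by
    rw [funext hf]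
    fun_prop
  have f_zero : f 0 = 0 := by simp [hf, hQ0]
  exact region_of_attraction_estimate_general hP₁.inv.toQuadraticForm' f_continuous f_zero
    (by simpa only [hh, ← hV, sub_neg] using hsub) hx hx0
end

section
/- Suppose P₁ ∈ ℝ^{n×n} is symmetric positive definite and Y₁ ∈ ℝ^{T×n} satisfies Z₀ Y₁ = [P₁; 0_{(S−n)×n}] and X₁ Y₁ + (X₁ Y₁)ᵀ ≺ 0. Then the matrix M := X₁ Y₁ P₁⁻¹ satisfies P₁⁻¹ M + Mᵀ P₁⁻¹ ≺ 0, and hence M is Hurwitz, i.e. every complex eigenvalue of M has strictly negative real part. (Continuous-time version of the stability condition, Section V-A.) -/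
open Matrix Filter Topology

def IsHurwitz {ι : Type*} [Fintype ι] [DecidableEq ι] (M : Matrix ι ι ℝ) : Prop :=
  ∀ μ ∈ spectrum ℂ (M.map (algebraMap ℝ ℂ)), μ.re < 0

def NegDef {ι : Type*} [Fintype ι] (M : Matrix ι ι ℝ) : Prop :=
  (-M).PosDef

/-!
If `M v = μ v`, the quadratic form of `Q M + Mᴴ Q` at `v` is `2 Re μ` times that of `Q`; when
`Q ⪰ 0` and `Q M + Mᴴ Q ≺ 0` this forces `Re μ < 0`. Since eigenvectors of a real matrix are
complex, definiteness is transported from `ℝ` to `ℂ` through a factorization `A = Bᴴ B`.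
For `M = N P⁻¹` and `Q = P⁻¹`, the Lyapunov inequality is `N + Nᵀ ≺ 0` conjugated by `P⁻¹`.
-/

section BaseChange

open scoped ComplexOrder MatrixOrder

variable {ι 𝕜 F : Type*} [RCLike 𝕜] {A : Matrix ι ι 𝕜}

theorem posSemidef_map [Finite ι] {R : Type*} [Ring R] [PartialOrder R] [StarRing R]
    [StarOrderedRing R] [FunLike F 𝕜 R] [RingHomClass F 𝕜 R] [StarHomClass F 𝕜 R]
    (hA : A.PosSemidef) (f : F) : (A.map f).PosSemidef := by
  classical
  have := Fintype.ofFinite ι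
  obtain ⟨B, rfl⟩ := CStarAlgebra.nonneg_iff_eq_star_mul_self.mp hA.nonneg
  rw [star_eq_conjTranspose, Matrix.map_mul, conjTranspose_map f (map_star f)]
  exact posSemidef_conjTranspose_mul_self (B.map f)

theorem posDef_map [Finite ι] {𝕜' : Type*} [RCLike 𝕜'] [FunLike F 𝕜 𝕜'] [RingHomClass F 𝕜 𝕜']
    [StarHomClass F 𝕜 𝕜'] (hA : A.PosDef) (f : F) : (A.map f).PosDef := by
  classical
  have := Fintype.ofFinite ι
  exact (posSemidef_map hA.posSemidef f).posDef_iff_isUnit.mpr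
    (hA.isUnit.map (f : 𝕜 →+* 𝕜').mapMatrix)

end BaseChange

section Lyapunov

variable {ι : Type*} [Fintype ι]

theorem star_dotProduct_lyapunov_mulVec {R : Type*} [CommSemiring R] [StarRing R]
    (Q : Matrix ι ι R) {M : Matrix ι ι R} {v : ι → R} {μ : R} (hv : M *ᵥ v = μ • v) :
    star v ⬝ᵥ (Q * M + Mᴴ * Q) *ᵥ v = (μ + star μ) * (star v ⬝ᵥ Q *ᵥ v) := by
  have hleft : star v ⬝ᵥ (Q * M) *ᵥ v = μ * (star v ⬝ᵥ Q *ᵥ v) := by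
    rw [← mulVec_mulVec, hv, mulVec_smul, dotProduct_smul, smul_eq_mul]
  have hright : star v ⬝ᵥ (Mᴴ * Q) *ᵥ v = star μ * (star v ⬝ᵥ Q *ᵥ v) := by
    rw [← mulVec_mulVec, dotProduct_mulVec, ← star_mulVec, hv, star_smul, smul_dotProduct,
      smul_eq_mul]
  rw [add_mulVec, dotProduct_add, hleft, hright, add_mul]

variable [DecidableEq ι]

open scoped ComplexOrder in
theorem re_neg_of_mem_spectrum_of_lyapunov {𝕜 : Type*} [RCLike 𝕜] {Q M : Matrix ι ι 𝕜}
    (hQ : Q.PosSemidef) (hM : (-(Q * M + Mᴴ * Q)).PosDef) {μ : 𝕜} (hμ : μ ∈ spectrum 𝕜 M) :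
    RCLike.re μ < 0 := by
  rw [← spectrum_toLin', ← Module.End.hasEigenvalue_iff_mem_spectrum] at hμ
  obtain ⟨v, hv⟩ := hμ.exists_hasEigenvector
  have hMv : M *ᵥ v = μ • v := hv.apply_eq_smul
  have hform : RCLike.re (star v ⬝ᵥ (-(Q * M + Mᴴ * Q)) *ᵥ v) =
      -(2 * RCLike.re μ) * RCLike.re (star v ⬝ᵥ Q *ᵥ v) := by
    rw [neg_mulVec, dotProduct_neg, star_dotProduct_lyapunov_mulVec Q hMv, ← starRingEnd_apply,
      RCLike.add_conj, ← RCLike.ofReal_ofNat, ← RCLike.ofReal_mul, map_neg, RCLike.re_ofReal_mul,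
      neg_mul]
  have hpos : 0 < -(2 * RCLike.re μ) * RCLike.re (star v ⬝ᵥ Q *ᵥ v) :=
    hform ▸ hM.re_dotProduct_pos hv.2
  linarith [pos_of_mul_pos_left hpos (hQ.re_dotProduct_nonneg v)]

open scoped ComplexOrder in
theorem isHurwitz_of_negDef_lyapunov {Q M : Matrix ι ι ℝ} (hQ : Q.PosSemidef)
    (hM : NegDef (Q * M + Mᵀ * Q)) : IsHurwitz M := by
  intro μ hμ
  let f : ℝ →⋆ₐ[ℝ] ℂ := StarAlgHom.ofId ℝ ℂ
  have hmap : (-(Q * M + Mᵀ * Q)).map f =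
      -(Q.map f * M.map f + (M.map f)ᴴ * Q.map f) := by
    rw [← conjTranspose_map f (map_star f), conjTranspose_eq_transpose_of_trivial,
      ← Matrix.map_mul, ← Matrix.map_mul, ← Matrix.map_add f (map_add f),
      ← Matrix.map_neg f (map_neg f)]
  exact re_neg_of_mem_spectrum_of_lyapunov (posSemidef_map hQ f) (hmap ▸ posDef_map hM f) hμ

theorem negDef_lyapunov_inv_iff {P N : Matrix ι ι ℝ} (hP : P.IsSymm) (hPu : IsUnit P) :
    NegDef (P⁻¹ * (N * P⁻¹) + (N * P⁻¹)ᵀ * P⁻¹) ↔ NegDef (N + Nᵀ) := by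
  have hconj : -(P⁻¹ * (N * P⁻¹) + (N * P⁻¹)ᵀ * P⁻¹) = star P⁻¹ * -(N + Nᵀ) * P⁻¹ := by
    rw [star_eq_conjTranspose, conjTranspose_eq_transpose_of_trivial, transpose_mul,
      transpose_nonsing_inv, hP.eq]
    noncomm_ring
  rw [NegDef, hconj, (isUnit_nonsing_inv_iff.mpr hPu).posDef_star_left_conjugate_iff, NegDef]

theorem continuous_time_stability_condition_general {P N : Matrix ι ι ℝ} (hP : P.PosDef)
    (hN : NegDef (N + Nᵀ)) :
    NegDef (P⁻¹ * (N * P⁻¹) + (N * P⁻¹)ᵀ * P⁻¹) ∧ IsHurwitz (N * P⁻¹) := by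
  have hLyapunov :=
    (negDef_lyapunov_inv_iff (isHermitian_iff_isSymm.mp hP.isHermitian) hP.isUnit).mpr hN
  exact ⟨hLyapunov, isHurwitz_of_negDef_lyapunov hP.inv.posSemidef hLyapunov⟩

end Lyapunov

/-- Continuous-time stability condition (Section V-A). -/
theorem continuous_time_stability_condition
    {n p T : ℕ}
    (Z₀ : Matrix (Fin n ⊕ Fin p) (Fin T) ℝ) (X₁ : Matrix (Fin n) (Fin T) ℝ)
    (P₁ : Matrix (Fin n) (Fin n) ℝ) (hP₁symm : P₁.IsSymm) (hP₁ : P₁.PosDef)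
    (Y₁ : Matrix (Fin T) (Fin n) ℝ)
    (h1 : Z₀ * Y₁ = Matrix.fromRows P₁ (0 : Matrix (Fin p) (Fin n) ℝ))
    (h2 : NegDef (X₁ * Y₁ + (X₁ * Y₁)ᵀ)) :
    NegDef (P₁⁻¹ * (X₁ * Y₁ * P₁⁻¹) + (X₁ * Y₁ * P₁⁻¹)ᵀ * P₁⁻¹) ∧
    IsHurwitz (X₁ * Y₁ * P₁⁻¹) :=
  continuous_time_stability_condition_general hP₁ h2
end

section
/- Let P₁ ∈ ℝ^{n×n} be symmetric positive definite, Ω ∈ ℝ^{n×n} symmetric positive definite, Y₁ ∈ ℝ^{T×n}, G₂ ∈ ℝ^{T×(S−n)}, and set G₁ := Y₁ P₁⁻¹, Ψ := (X₁ − E D₀) G₁, Ξ := (X₁ − E D₀) G₂. Assume ‖D₀‖₂ ≤ ‖Δ‖₂ and that Y₁ᵀ (X₁ − E D₀)ᵀ P₁⁻¹ (X₁ − E D₀) Y₁ − P₁ + Ω ≺ 0. Then for V(x) := xᵀ P₁⁻¹ x and every x ∈ ℝⁿ, the Lyapunov decrement along x⁺ = Ψ x + Ξ Q(x) satisfies V(Ψx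 + ΞQ(x)) − V(x) ≤ ℓ(x), where ℓ(x) := −xᵀ P₁⁻¹ Ω P₁⁻¹ x + ℓ₁(x) + ℓ₂(x) + ℓ₃(x) + ℓ₄(x) and ℓ₁, ℓ₂, ℓ₃, ℓ₄ are the data-based quantities defined in the context. (Data-based upper bound on the Lyapunov decrement under noisy data, inequality (34).) -/
open Matrix Filter Topology

noncomputable def euclNorm {ι : Type*} [Fintype ι] (v : ι → ℝ) : ℝ :=
  Real.sqrt (∑ i, v i ^ 2)

noncomputable def spec2Norm {ι κ : Type*} [Fintype ι] [Fintype κ]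
    (M : Matrix ι κ ℝ) : ℝ :=
  sSup ((fun v => euclNorm (M *ᵥ v)) '' {v | euclNorm v ≤ 1})

/-- The data-based bound `ℓ(x)` of inequality (34):
`ℓ(x) = -xᵀP₁⁻¹ΩP₁⁻¹x + ℓ₁(x) + ℓ₂(x) + ℓ₃(x) + ℓ₄(x)`. -/
noncomputable def ellFun {n s s' p T : ℕ}
    (X₁ : Matrix (Fin n) (Fin T) ℝ) (E : Matrix (Fin n) (Fin s) ℝ)
    (Δ : Matrix (Fin s) (Fin s') ℝ) (P₁ Ω : Matrix (Fin n) (Fin n) ℝ)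
    (G₁ : Matrix (Fin T) (Fin n) ℝ) (G₂ : Matrix (Fin T) (Fin p) ℝ)
    (Q : (Fin n → ℝ) → Fin p → ℝ) (x : Fin n → ℝ) : ℝ :=
  - (x ⬝ᵥ ((P₁⁻¹ * Ω * P₁⁻¹) *ᵥ x))
  + (((2:ℝ) • ((X₁ * G₁) *ᵥ x) + (X₁ * G₂) *ᵥ Q x) ⬝ᵥ (P₁⁻¹ *ᵥ ((X₁ * G₂) *ᵥ Q x)))
  + spec2Norm Δ
      * euclNorm (((2:ℝ) • ((X₁ * G₁) *ᵥ x) + (X₁ * G₂) *ᵥ Q x) ᵥ* (P₁⁻¹ * E))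
      * euclNorm (G₂ *ᵥ Q x)
  + spec2Norm Δ * euclNorm ((2:ℝ) • (G₁ *ᵥ x) + G₂ *ᵥ Q x)
      * euclNorm ((Eᵀ * P₁⁻¹ * X₁ * G₂) *ᵥ Q x)
  + spec2Norm Δ ^ 2 * spec2Norm (Eᵀ * P₁⁻¹ * E)
      * euclNorm ((2:ℝ) • (G₁ *ᵥ x) + G₂ *ᵥ Q x) * euclNorm (G₂ *ᵥ Q x)

/-!
Write `A = X₁ - E D₀`, `a = Ψ x` and `b = Ξ Q(x)`. By symmetry of `P₁⁻¹`,
`V(a + b) - V(x) = (V(a) - V(x)) + (2 a + b)ᵀ P₁⁻¹ b`. The congruence of the matrix inequality by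
`P₁⁻¹` bounds the nominal decrement `V(a) - V(x)` by `-xᵀ P₁⁻¹ Ω P₁⁻¹ x`. In the second summand both
factors are images under `A`, namely `2 a + b = A (2 G₁ x + G₂ Q(x))` and `b = A G₂ Q(x)`; expanding
in `E D₀` gives `ℓ₁`, two terms linear in `D₀` and one quadratic, and the Cauchy-Schwarz inequality
with `‖D₀‖₂ ≤ ‖Δ‖₂` bounds these three by `ℓ₂`, `ℓ₃` and `ℓ₄`.
-/

section Norms

open scoped Matrix.Norms.L2Operator

variable {ι κ : Type*} [Fintype ι] [Fintype κ]

theorem euclNorm_eq_norm_toLp (v : ι → ℝ) : euclNorm v = ‖WithLp.toLp 2 v‖ := by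
  simp [euclNorm, EuclideanSpace.norm_eq]

theorem euclNorm_nonneg (v : ι → ℝ) : 0 ≤ euclNorm v :=
  Real.sqrt_nonneg _

theorem abs_dotProduct_le_euclNorm_mul_euclNorm (v w : ι → ℝ) :
    |v ⬝ᵥ w| ≤ euclNorm v * euclNorm w := by
  simpa only [EuclideanSpace.inner_toLp_toLp, star_trivial, ← euclNorm_eq_norm_toLp,
    dotProduct_comm w v] using abs_real_inner_le_norm (WithLp.toLp 2 v) (WithLp.toLp 2 w)

theorem spec2Norm_eq_l2_opNorm [DecidableEq κ] (M : Matrix ι κ ℝ) : spec2Norm M = ‖M‖ := by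
  rw [l2_opNorm_def, ← ContinuousLinearMap.sSup_unitClosedBall_eq_norm (toEuclideanLin.trans
      LinearMap.toContinuousLinearMap M), spec2Norm]
  congr 1
  ext r
  constructor
  · rintro ⟨v, hv, rfl⟩
    refine ⟨WithLp.toLp 2 v, ?_, (euclNorm_eq_norm_toLp _).symm⟩
    rwa [mem_closedBall_zero_iff, ← euclNorm_eq_norm_toLp]
  · rintro ⟨v, hv, rfl⟩
    refine ⟨v.ofLp, ?_, euclNorm_eq_norm_toLp _⟩
    rwa [Set.mem_ofPred_eq, euclNorm_eq_norm_toLp, ← mem_closedBall_zero_iff]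

theorem spec2Norm_nonneg (M : Matrix ι κ ℝ) : 0 ≤ spec2Norm M := by
  classical
  rw [spec2Norm_eq_l2_opNorm]
  exact norm_nonneg _

theorem euclNorm_mulVec_le (M : Matrix ι κ ℝ) (v : κ → ℝ) :
    euclNorm (M *ᵥ v) ≤ spec2Norm M * euclNorm v := by
  classical
  rw [spec2Norm_eq_l2_opNorm, euclNorm_eq_norm_toLp, euclNorm_eq_norm_toLp]
  exact l2_opNorm_mulVec M (WithLp.toLp 2 v)

theorem abs_dotProduct_mulVec_le (M : Matrix ι κ ℝ) (u : ι → ℝ) (v : κ → ℝ) :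
    |u ⬝ᵥ M *ᵥ v| ≤ spec2Norm M * euclNorm u * euclNorm v := by
  calc |u ⬝ᵥ M *ᵥ v| ≤ euclNorm u * euclNorm (M *ᵥ v) :=
        abs_dotProduct_le_euclNorm_mul_euclNorm _ _
    _ ≤ euclNorm u * (spec2Norm M * euclNorm v) :=
        mul_le_mul_of_nonneg_left (euclNorm_mulVec_le M v) (euclNorm_nonneg u)
    _ = spec2Norm M * euclNorm u * euclNorm v := by ring

end Norms

section PerturbedBilinearForm

variable {m n s t R : Type*} [Fintype m] [Fintype n] [Fintype s] [Fintype t]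

theorem sub_mulVec_dotProduct_mulVec_sub_mulVec [CommRing R]
    (N : Matrix m n R) (E : Matrix m s R) (F : Matrix n t R)
    (u : m → R) (v : n → R) (a : s → R) (b : t → R) :
    (u - E *ᵥ a) ⬝ᵥ N *ᵥ (v - F *ᵥ b) =
      u ⬝ᵥ N *ᵥ v - u ᵥ* (N * F) ⬝ᵥ b - a ⬝ᵥ (Eᵀ * N) *ᵥ v + a ⬝ᵥ (Eᵀ * N * F) *ᵥ b := by
  have transpose_E (w : m → R) : a ⬝ᵥ Eᵀ *ᵥ w = E *ᵥ a ⬝ᵥ w := by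
    rw [dotProduct_transpose_mulVec, dotProduct_comm]
  simp only [mulVec_sub, sub_dotProduct, dotProduct_sub, ← dotProduct_mulVec, ← mulVec_mulVec,
    transpose_E]
  ring

theorem sub_mulVec_dotProduct_mulVec_sub_mulVec_le
    (N : Matrix m n ℝ) (E : Matrix m s ℝ) (F : Matrix n t ℝ)
    (u : m → ℝ) (v : n → ℝ) {a : s → ℝ} {b : t → ℝ} {α β : ℝ}
    (ha : euclNorm a ≤ α) (hb : euclNorm b ≤ β) :
    (u - E *ᵥ a) ⬝ᵥ N *ᵥ (v - F *ᵥ b) ≤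
      u ⬝ᵥ N *ᵥ v + euclNorm (u ᵥ* (N * F)) * β + α * euclNorm ((Eᵀ * N) *ᵥ v)
        + spec2Norm (Eᵀ * N * F) * α * β := by
  have hα : 0 ≤ α := (euclNorm_nonneg a).trans ha
  have right_le : |u ᵥ* (N * F) ⬝ᵥ b| ≤ euclNorm (u ᵥ* (N * F)) * β :=
    (abs_dotProduct_le_euclNorm_mul_euclNorm _ _).trans
      (mul_le_mul_of_nonneg_left hb (euclNorm_nonneg _))
  have left_le : |a ⬝ᵥ (Eᵀ * N) *ᵥ v| ≤ α * euclNorm ((Eᵀ * N) *ᵥ v) :=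
    (abs_dotProduct_le_euclNorm_mul_euclNorm _ _).trans
      (mul_le_mul_of_nonneg_right ha (euclNorm_nonneg _))
  have both_le : |a ⬝ᵥ (Eᵀ * N * F) *ᵥ b| ≤ spec2Norm (Eᵀ * N * F) * α * β :=
    (abs_dotProduct_mulVec_le _ _ _).trans <|
      mul_le_mul (mul_le_mul_of_nonneg_left ha (spec2Norm_nonneg _)) hb (euclNorm_nonneg b)
        (mul_nonneg (spec2Norm_nonneg _) hα)
  rw [sub_mulVec_dotProduct_mulVec_sub_mulVec]
  linarith [neg_le_of_abs_le right_le, neg_le_of_abs_le left_le, le_of_abs_le both_le]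

theorem noisy_mulVec_dotProduct_mulVec_le
    (X : Matrix n t ℝ) (E : Matrix n s ℝ) (D : Matrix s t ℝ) (N : Matrix n n ℝ)
    {δ : ℝ} (hD : spec2Norm D ≤ δ) (h q : t → ℝ) :
    (X - E * D) *ᵥ h ⬝ᵥ N *ᵥ ((X - E * D) *ᵥ q) ≤
      X *ᵥ h ⬝ᵥ N *ᵥ (X *ᵥ q)
        + δ * euclNorm ((X *ᵥ h) ᵥ* (N * E)) * euclNorm q
        + δ * euclNorm h * euclNorm ((Eᵀ * N * X) *ᵥ q)
        + δ ^ 2 * spec2Norm (Eᵀ * N * E) * euclNorm h * euclNorm q := by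
  have noise_le (w : t → ℝ) : euclNorm (D *ᵥ w) ≤ δ * euclNorm w :=
    (euclNorm_mulVec_le D w).trans (mul_le_mul_of_nonneg_right hD (euclNorm_nonneg w))
  have bound := sub_mulVec_dotProduct_mulVec_sub_mulVec_le N E E (X *ᵥ h) (X *ᵥ q)
    (noise_le h) (noise_le q)
  simp only [sub_mulVec, ← mulVec_mulVec] at bound ⊢
  linarith

end PerturbedBilinearForm

section QuadraticForm

variable {m n R : Type*} [Fintype n]

theorem add_dotProduct_mulVec_add_of_isSymm [CommSemiring R] {N : Matrix n n R} (hN : N.IsSymm)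
    (a b : n → R) :
    (a + b) ⬝ᵥ N *ᵥ (a + b) = a ⬝ᵥ N *ᵥ a + ((2 : R) • a + b) ⬝ᵥ N *ᵥ b := by
  have comm : b ⬝ᵥ N *ᵥ a = a ⬝ᵥ N *ᵥ b := by
    rw [← dotProduct_transpose_mulVec, hN.eq]
  simp only [mulVec_add, add_dotProduct, dotProduct_add, smul_dotProduct, smul_eq_mul, comm]
  ring

theorem dotProduct_mulVec_decrement_le_of_posSemidef [Fintype m] [DecidableEq n]
    {P Ω : Matrix n n ℝ} {N : Matrix m m ℝ} {B : Matrix m n ℝ} (hPsymm : P.IsSymm)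
    (hP : IsUnit P) (hlmi : (-(Bᵀ * N * B - P + Ω)).PosSemidef) (x : n → ℝ) :
    (B * P⁻¹) *ᵥ x ⬝ᵥ N *ᵥ ((B * P⁻¹) *ᵥ x) - x ⬝ᵥ P⁻¹ *ᵥ x ≤
      -(x ⬝ᵥ (P⁻¹ * Ω * P⁻¹) *ᵥ x) := by
  have hdet : IsUnit P.det := (isUnit_iff_isUnit_det P).mp hP
  have congruence : (P⁻¹)ᴴ * -(Bᵀ * N * B - P + Ω) * P⁻¹ =
      P⁻¹ - (B * P⁻¹)ᵀ * N * (B * P⁻¹) - P⁻¹ * Ω * P⁻¹ := by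
    rw [conjTranspose_eq_transpose_of_trivial, transpose_mul, hPsymm.inv.eq]
    simp only [mul_neg, neg_mul, mul_add, mul_sub, add_mul, sub_mul, Matrix.mul_assoc,
      nonsing_inv_mul P hdet, one_mul]
    abel
  have quadForm : x ⬝ᵥ ((B * P⁻¹)ᵀ * N * (B * P⁻¹)) *ᵥ x =
      (B * P⁻¹) *ᵥ x ⬝ᵥ N *ᵥ ((B * P⁻¹) *ᵥ x) := by
    rw [← mulVec_mulVec, ← mulVec_mulVec, dotProduct_transpose_mulVec, dotProduct_comm]
  have nonneg := (hlmi.conjTranspose_mul_mul_same P⁻¹).dotProduct_mulVec_nonneg x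
  rw [congruence, star_trivial, sub_mulVec, sub_mulVec, dotProduct_sub, dotProduct_sub,
    quadForm] at nonneg
  linarith

end QuadraticForm

theorem lyapunov_decrement_bound_noisy_data_general
    {n s s' p T : ℕ}
    (X₁ : Matrix (Fin n) (Fin T) ℝ) (E : Matrix (Fin n) (Fin s) ℝ)
    (D₀ : Matrix (Fin s) (Fin T) ℝ) (Δ : Matrix (Fin s) (Fin s') ℝ)
    (Q : (Fin n → ℝ) → Fin p → ℝ)
    (P₁ : Matrix (Fin n) (Fin n) ℝ) (hP₁symm : P₁.IsSymm) (hP₁ : IsUnit P₁)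
    (Ω : Matrix (Fin n) (Fin n) ℝ)
    (Y₁ : Matrix (Fin T) (Fin n) ℝ) (G₂ : Matrix (Fin T) (Fin p) ℝ)
    (G₁ : Matrix (Fin T) (Fin n) ℝ) (hG₁ : G₁ = Y₁ * P₁⁻¹)
    (Ψ : Matrix (Fin n) (Fin n) ℝ) (hΨ : Ψ = (X₁ - E * D₀) * G₁)
    (Ξ : Matrix (Fin n) (Fin p) ℝ) (hΞ : Ξ = (X₁ - E * D₀) * G₂)
    (hD₀norm : spec2Norm D₀ ≤ spec2Norm Δ)
    (hrob : (-(Y₁ᵀ * (X₁ - E * D₀)ᵀ * P₁⁻¹ * ((X₁ - E * D₀) * Y₁) - P₁ + Ω)).PosSemidef)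
    (x : Fin n → ℝ) :
    (Ψ *ᵥ x + Ξ *ᵥ Q x) ⬝ᵥ (P₁⁻¹ *ᵥ (Ψ *ᵥ x + Ξ *ᵥ Q x)) - x ⬝ᵥ (P₁⁻¹ *ᵥ x)
      ≤ ellFun X₁ E Δ P₁ Ω G₁ G₂ Q x := by
  have nominal : Ψ *ᵥ x ⬝ᵥ P₁⁻¹ *ᵥ (Ψ *ᵥ x) - x ⬝ᵥ P₁⁻¹ *ᵥ x ≤
      -(x ⬝ᵥ (P₁⁻¹ * Ω * P₁⁻¹) *ᵥ x) := by
    rw [← transpose_mul] at hrob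
    simpa only [hΨ, hG₁, Matrix.mul_assoc] using
      dotProduct_mulVec_decrement_le_of_posSemidef hP₁symm hP₁ hrob x
  have cross := noisy_mulVec_dotProduct_mulVec_le X₁ E D₀ P₁⁻¹ hD₀norm
    ((2 : ℝ) • (G₁ *ᵥ x) + G₂ *ᵥ Q x) (G₂ *ᵥ Q x)
  simp only [mulVec_add, mulVec_smul, mulVec_mulVec, ← hΨ, ← hΞ] at cross
  rw [add_dotProduct_mulVec_add_of_isSymm hP₁symm.inv, mulVec_mulVec _ P₁⁻¹ Ξ, ellFun,
    mulVec_mulVec _ P₁⁻¹ (X₁ * G₂)]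
  linarith

/-- Data-based upper bound on the Lyapunov decrement under noisy data,
inequality (34). -/
theorem lyapunov_decrement_bound_noisy_data
    {n s s' p T : ℕ}
    (X₁ : Matrix (Fin n) (Fin T) ℝ) (E : Matrix (Fin n) (Fin s) ℝ)
    (D₀ : Matrix (Fin s) (Fin T) ℝ) (Δ : Matrix (Fin s) (Fin s') ℝ)
    (Q : (Fin n → ℝ) → Fin p → ℝ)
    (P₁ : Matrix (Fin n) (Fin n) ℝ) (hP₁symm : P₁.IsSymm) (hP₁ : P₁.PosDef)
    (Ω : Matrix (Fin n) (Fin n) ℝ) (hΩsymm : Ω.IsSymm) (hΩ : Ω.PosDef)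
    (Y₁ : Matrix (Fin T) (Fin n) ℝ) (G₂ : Matrix (Fin T) (Fin p) ℝ)
    (G₁ : Matrix (Fin T) (Fin n) ℝ) (hG₁ : G₁ = Y₁ * P₁⁻¹)
    (Ψ : Matrix (Fin n) (Fin n) ℝ) (hΨ : Ψ = (X₁ - E * D₀) * G₁)
    (Ξ : Matrix (Fin n) (Fin p) ℝ) (hΞ : Ξ = (X₁ - E * D₀) * G₂)
    (hD₀norm : spec2Norm D₀ ≤ spec2Norm Δ)
    (hrob : NegDef (Y₁ᵀ * (X₁ - E * D₀)ᵀ * P₁⁻¹ * ((X₁ - E * D₀) * Y₁) - P₁ + Ω)) :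
    ∀ x : Fin n → ℝ,
      (Ψ *ᵥ x + Ξ *ᵥ Q x) ⬝ᵥ (P₁⁻¹ *ᵥ (Ψ *ᵥ x + Ξ *ᵥ Q x)) - x ⬝ᵥ (P₁⁻¹ *ᵥ x)
        ≤ ellFun X₁ E Δ P₁ Ω G₁ G₂ Q x := by
  exact lyapunov_decrement_bound_noisy_data_general X₁ E D₀ Δ Q P₁ hP₁symm hP₁.isUnit Ω Y₁ G₂
    G₁ hG₁ Ψ hΨ Ξ hΞ hD₀norm hrob.posSemidef
end

section
/- In the setting of Theorem 6 (so that V(x) = xᵀP₁⁻¹x satisfies V(Ψx + ΞQ(x)) − V(x) ≤ ℓ(x) for all x, with Ψ := (X₁ − E D₀)Y₁P₁⁻¹, Ξ := (X₁ − E D₀)G₂, Q continuous with Q(0) = 0), let ℒ := {x : ℓ(x) < 0} and for γ > 0 let ℛ_γ := {x : V(x) ≤ γ}. If ℛ_γ ⊆ ℒ ∪ {0}, then ℛ_γ is positively invariant for the unperturbed closed-loop system x⁺ = Ψ x + Ξ Q(x), and every solution starting in ℛ_γ converges to 0. (Proposition 2: region-of-attraction estimate from noisy data.) -/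
open Matrix Filter Topology

/-!
On a compact invariant set where `V` decreases strictly away from a fixed point `a`, the values of
`V` along an orbit converge. A cluster point `z` of the orbit then satisfies `V (f z) = V z`, both
sides being the limit of these values, so `z = a`; by compactness the orbit converges to `a`. The
set `ℛ_γ` is compact because `V` is continuous, positive away from `0` and homogeneous, hence
bounded below by a positive multiple of `‖x‖ ^ 2`.
-/

section Homogeneous

variable {F : Type*} [NormedAddCommGroup F] [NormedSpace ℝ F] [ProperSpace F] {V : F → ℝ} {p : ℝ}

theorem exists_pos_mul_norm_rpow_le_of_homogeneous (hp : p ≠ 0) (hcont : Continuous V)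
    (hhom : ∀ a : ℝ, 0 ≤ a → ∀ x, V (a • x) = a ^ p * V x) (hpos : ∀ x, x ≠ 0 → 0 < V x) :
    ∃ m > 0, ∀ x, m * ‖x‖ ^ p ≤ V x := by
  obtain ⟨m, hm, hle⟩ : ∃ m > 0, ∀ y ∈ Metric.sphere (0 : F) 1, m ≤ V y :=
    (isCompact_sphere (0 : F) 1).exists_forall_le' hcont.continuousOn fun y hy =>
      hpos y (ne_zero_of_mem_unit_sphere ⟨y, hy⟩)
  refine ⟨m, hm, fun x => ?_⟩
  rcases eq_or_ne x 0 with rfl | hx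
  · have hzero : V 0 = 0 := by simpa [Real.zero_rpow hp] using hhom 0 le_rfl 0
    simp [hzero, Real.zero_rpow hp]
  · have hnorm : ‖x‖ ≠ 0 := norm_ne_zero_iff.2 hx
    have hunit : ‖x‖⁻¹ • x ∈ Metric.sphere (0 : F) 1 := by simp [norm_smul, hnorm]
    calc m * ‖x‖ ^ p ≤ V (‖x‖⁻¹ • x) * ‖x‖ ^ p := by gcongr; exact hle _ hunit
      _ = V (‖x‖ • ‖x‖⁻¹ • x) := by rw [hhom _ (norm_nonneg x), mul_comm]
      _ = V x := by rw [smul_inv_smul₀ hnorm]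

theorem isCompact_sublevel_of_homogeneous (hp : 0 < p) (hcont : Continuous V)
    (hhom : ∀ a : ℝ, 0 ≤ a → ∀ x, V (a • x) = a ^ p * V x) (hpos : ∀ x, x ≠ 0 → 0 < V x) (γ : ℝ) :
    IsCompact {x | V x ≤ γ} := by
  obtain ⟨m, hm, hle⟩ := exists_pos_mul_norm_rpow_le_of_homogeneous hp.ne' hcont hhom hpos
  refine Metric.isCompact_of_isClosed_isBounded (isClosed_le hcont continuous_const)
    ((Metric.isBounded_closedBall (x := (0 : F)) (r := (γ / m) ^ p⁻¹)).subset fun x hx => ?_)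
  have hbound : ‖x‖ ^ p ≤ γ / m := (le_div_iff₀' hm).2 ((hle x).trans hx)
  have hnonneg : 0 ≤ γ / m := (Real.rpow_nonneg (norm_nonneg x) p).trans hbound
  exact mem_closedBall_zero_iff.2
    ((Real.le_rpow_inv_iff_of_pos (norm_nonneg x) hnonneg hp).2 hbound)

end Homogeneous

theorem isCompact_sublevel_of_posDef {ι : Type*} [Fintype ι] {M : Matrix ι ι ℝ} (hM : M.PosDef)
    (γ : ℝ) : IsCompact {x : ι → ℝ | x ⬝ᵥ M *ᵥ x ≤ γ} := by
  refine isCompact_sublevel_of_homogeneous (p := 2) two_pos (by fun_prop) (fun a _ x => ?_)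
    (fun x hx => by simpa using hM.dotProduct_mulVec_pos hx) γ
  simp only [mulVec_smul, smul_dotProduct, dotProduct_smul, smul_eq_mul, Real.rpow_two]
  ring

section Lyapunov

variable {X β : Type*} {f : X → X} {V : X → β} {K : Set X} {a : X} {x : ℕ → X}

theorem le_of_strict_decrease_off_fixedPt [Preorder β] (hfa : f.IsFixedPt a)
    (hdecr : ∀ y ∈ K, y ≠ a → V (f y) < V y) {y : X} (hy : y ∈ K) : V (f y) ≤ V y := by
  rcases eq_or_ne y a with rfl | hne
  · exact (congrArg V hfa).le
  · exact (hdecr y hy hne).le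

theorem mapsTo_sublevel_of_strict_decrease [Preorder β] {γ : β} (hfa : f.IsFixedPt a)
    (hdecr : ∀ y ∈ {y | V y ≤ γ}, y ≠ a → V (f y) < V y) :
    Set.MapsTo f {y | V y ≤ γ} {y | V y ≤ γ} :=
  fun _ hy => (le_of_strict_decrease_off_fixedPt hfa hdecr hy).trans hy

theorem orbit_mem_of_mapsTo (hfK : Set.MapsTo f K K) (hx : ∀ t, x (t + 1) = f (x t))
    (hx0 : x 0 ∈ K) (t : ℕ) : x t ∈ K := by
  induction t with
  | zero => exact hx0
  | succ t ih => exact hx t ▸ hfK ih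

theorem eq_of_mapClusterPt_of_tendsto_comp {Y ι : Type*} [TopologicalSpace X] [TopologicalSpace Y]
    [T2Space Y] {l : Filter ι} {u : ι → X} {g : X → Y} {z : X} {c : Y}
    (hz : MapClusterPt z l u) (hu : ∀ᶠ i in l, u i ∈ K) (hg : ContinuousWithinAt g K z)
    (hlim : Tendsto (fun i => g (u i)) l (𝓝 c)) : g z = c :=
  have hcluster : MapClusterPt (g z) l (g ∘ u) :=
    hz.tendsto_comp' (hg.mono_left (inf_le_inf_left _ (le_principal_iff.2 hu)))
  eq_of_nhds_neBot (hcluster.clusterPt.mono hlim)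

theorem tendsto_of_strict_decrease_on_compact [TopologicalSpace X]
    [ConditionallyCompleteLinearOrder β] [TopologicalSpace β] [OrderTopology β]
    (hK : IsCompact K) (hfK : Set.MapsTo f K K) (hf : ContinuousOn f K) (hV : ContinuousOn V K)
    (hfa : f.IsFixedPt a) (hdecr : ∀ y ∈ K, y ≠ a → V (f y) < V y)
    (hx : ∀ t, x (t + 1) = f (x t)) (hx0 : x 0 ∈ K) : Tendsto x atTop (𝓝 a) := by
  have hmem : ∀ t, x t ∈ K := orbit_mem_of_mapsTo hfK hx hx0
  have hanti : Antitone fun t => V (x t) := antitone_nat_of_succ_le fun t =>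
    hx t ▸ le_of_strict_decrease_off_fixedPt hfa hdecr (hmem t)
  have hbdd : BddBelow (Set.range fun t => V (x t)) :=
    haveI : Nonempty β := ⟨V a⟩
    (hK.image_of_continuousOn hV).bddBelow.mono
      (Set.range_subset_iff.2 fun t => Set.mem_image_of_mem V (hmem t))
  have hlim : Tendsto (fun t => V (x t)) atTop (𝓝 (⨅ t, V (x t))) :=
    tendsto_atTop_ciInf hanti hbdd
  have hlim_succ : Tendsto (fun t => V (f (x t))) atTop (𝓝 (⨅ t, V (x t))) := by
    simpa only [← hx, Function.comp_def] using hlim.comp (tendsto_add_atTop_nat 1)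
  refine hK.tendsto_nhds_of_unique_mapClusterPt (.of_forall hmem) fun z hz hclus => ?_
  have hVz : V z = ⨅ t, V (x t) :=
    eq_of_mapClusterPt_of_tendsto_comp hclus (.of_forall hmem) (hV z hz) hlim
  have hVfz : V (f z) = ⨅ t, V (x t) :=
    eq_of_mapClusterPt_of_tendsto_comp (g := V ∘ f) hclus (.of_forall hmem)
      (hV.comp hf hfK z hz) hlim_succ
  by_contra hne
  exact (hdecr z hz hne).ne (hVfz.trans hVz.symm)

end Lyapunov

theorem region_of_attraction_estimate_noisy_data_general {ι : Type*} [Fintype ι]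
    {M : Matrix ι ι ℝ} (hM : M.PosDef) {f : (ι → ℝ) → ι → ℝ} {ℓ : (ι → ℝ) → ℝ} {γ : ℝ}
    (hf : ContinuousOn f {x | x ⬝ᵥ M *ᵥ x ≤ γ}) (hf0 : f 0 = 0)
    (hdec : ∀ x, x ⬝ᵥ M *ᵥ x ≤ γ → f x ⬝ᵥ M *ᵥ f x - x ⬝ᵥ M *ᵥ x ≤ ℓ x)
    (hsub : ∀ x, x ⬝ᵥ M *ᵥ x ≤ γ → ℓ x < 0 ∨ x = 0)
    {x : ℕ → ι → ℝ} (hx : ∀ t, x (t + 1) = f (x t)) (hx0 : x 0 ⬝ᵥ M *ᵥ x 0 ≤ γ) :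
    (∀ t, x t ⬝ᵥ M *ᵥ x t ≤ γ) ∧ Tendsto x atTop (𝓝 0) := by
  have hdecr : ∀ y ∈ {y | y ⬝ᵥ M *ᵥ y ≤ γ}, y ≠ 0 → f y ⬝ᵥ M *ᵥ f y < y ⬝ᵥ M *ᵥ y :=
    fun y hy hne => sub_neg.1 ((hdec y hy).trans_lt ((hsub y hy).resolve_right hne))
  have hmaps := mapsTo_sublevel_of_strict_decrease (V := fun y => y ⬝ᵥ M *ᵥ y) hf0 hdecr
  exact ⟨orbit_mem_of_mapsTo hmaps hx hx0,
    tendsto_of_strict_decrease_on_compact (V := fun y => y ⬝ᵥ M *ᵥ y)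
      (isCompact_sublevel_of_posDef hM γ) hmaps hf (by fun_prop) hf0 hdecr hx hx0⟩

/-- Proposition 2 (region-of-attraction estimate from noisy data). -/
theorem region_of_attraction_estimate_noisy_data
    {n s s' p T : ℕ}
    (X₁ : Matrix (Fin n) (Fin T) ℝ) (E : Matrix (Fin n) (Fin s) ℝ)
    (D₀ : Matrix (Fin s) (Fin T) ℝ) (Δ : Matrix (Fin s) (Fin s') ℝ)
    (Q : (Fin n → ℝ) → Fin p → ℝ) (hQcont : Continuous Q) (hQ0 : Q 0 = 0)
    (P₁ : Matrix (Fin n) (Fin n) ℝ) (hP₁symm : P₁.IsSymm) (hP₁ : P₁.PosDef)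
    (Ω : Matrix (Fin n) (Fin n) ℝ) (hΩsymm : Ω.IsSymm) (hΩ : Ω.PosDef)
    (Y₁ : Matrix (Fin T) (Fin n) ℝ) (G₂ : Matrix (Fin T) (Fin p) ℝ)
    (G₁ : Matrix (Fin T) (Fin n) ℝ) (hG₁ : G₁ = Y₁ * P₁⁻¹)
    (Ψ : Matrix (Fin n) (Fin n) ℝ) (hΨ : Ψ = (X₁ - E * D₀) * Y₁ * P₁⁻¹)
    (Ξ : Matrix (Fin n) (Fin p) ℝ) (hΞ : Ξ = (X₁ - E * D₀) * G₂)
    (hD₀norm : spec2Norm D₀ ≤ spec2Norm Δ)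
    (hrob : NegDef (Y₁ᵀ * (X₁ - E * D₀)ᵀ * P₁⁻¹ * ((X₁ - E * D₀) * Y₁) - P₁ + Ω))
    (V : (Fin n → ℝ) → ℝ) (hV : ∀ x, V x = x ⬝ᵥ (P₁⁻¹ *ᵥ x))
    -- the Lyapunov decrement bound from the setting of Theorem 6:
    (hdec : ∀ x : Fin n → ℝ,
      V (Ψ *ᵥ x + Ξ *ᵥ Q x) - V x ≤ ellFun X₁ E Δ P₁ Ω G₁ G₂ Q x)
    (γ : ℝ) (hγ : 0 < γ)
    -- ℛ_γ ⊆ ℒ ∪ {0}: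
    (hsub : ∀ x, V x ≤ γ → ellFun X₁ E Δ P₁ Ω G₁ G₂ Q x < 0 ∨ x = 0) :
    ∀ x : ℕ → Fin n → ℝ,
      (∀ t, x (t + 1) = Ψ *ᵥ x t + Ξ *ᵥ Q (x t)) → V (x 0) ≤ γ →
      (∀ t, V (x t) ≤ γ) ∧ Filter.Tendsto x Filter.atTop (nhds 0) := by
  obtain rfl : V = fun x => x ⬝ᵥ P₁⁻¹ *ᵥ x := funext hV
  exact fun x => region_of_attraction_estimate_noisy_data_general hP₁.inv (by fun_prop)
    (by simp [hQ0]) (fun y _ => hdec y) hsub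
end
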